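/- Wick's formula for the fourth moment: for all indices i, j, k, l, ∫ xᵢ·xⱼ·xₖ·xₗ·exp(−(1/2)·⟨x, Q·x⟩) dx = (2π)^{n/2} · (det Q)^{−1/2} · ((Q⁻¹)ᵢⱼ·(Q⁻¹)ₖₗ + (Q⁻¹)ᵢₖ·(Q⁻¹)ⱼₗ + (Q⁻¹)ᵢₗ·(Q⁻¹)ⱼₖ), i.e. the fourth moment is the sum over the three perfect pairings of {i, j, k, l}, each pairing contributing the product of the corresponding entries of Q⁻¹. -/

import Mathlib

open Matrix MeasureTheory Real

/-!
The weight `ρ x = exp (-⟨x, Q x⟩ / 2)` satisfies `∂ᵥ ρ = -⟨v, Q x⟩ ρ`, and along `v = Q⁻¹ eᵢ` the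
factor `⟨v, Q x⟩` is the coordinate `xᵢ`. Integrating `∂ᵥ (f ρ)` to zero therefore trades a factor
`xᵢ` for a derivative: `∫ xᵢ f ρ = ∫ (∂ᵥ f) ρ`. When `f` is a product of coordinates, `∂ᵥ` removes
one factor `xⱼ` at a time at the price of `(Q⁻¹)ᵢⱼ`, that is, it pairs `xᵢ` with each remaining
factor in turn. Repeating this leaves the sum over pairings times `∫ ρ`, and a factorization
`Q = Bᵀ B` turns `ρ` into a standard Gaussian and yields both the value of `∫ ρ` and the decay
that justifies the integrations by parts.
-/

section NormedSpace

variable {E F : Type*} [NormedAddCommGroup E] [NormedSpace ℝ E] [FiniteDimensional ℝ E]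
  [MeasurableSpace E] [BorelSpace E] [NormedAddCommGroup F] [NormedSpace ℝ F]
  (μ : Measure E) [μ.IsAddHaarMeasure]

lemma integrable_norm_pow_mul_exp_neg_mul_sq_norm {b : ℝ} (hb : 0 < b) (k : ℕ) :
    Integrable (fun x : E ↦ ‖x‖ ^ k * exp (-b * ‖x‖ ^ 2)) μ := by
  rcases subsingleton_or_nontrivial E with _ | _
  · have : IsFiniteMeasure μ := ⟨Set.subsingleton_univ.isCompact.measure_lt_top⟩
    exact .of_finite
  · rw [integrable_fun_norm_addHaar μ (f := fun r ↦ r ^ k * exp (-b * r ^ 2))]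
    have h := integrableOn_rpow_mul_exp_neg_mul_sq hb
      (neg_one_lt_zero.trans_le (Module.finrank ℝ E - 1 + k).cast_nonneg)
    simpa only [smul_eq_mul, ← mul_assoc, ← pow_add, rpow_natCast] using h

lemma integral_comp_continuousLinearMap {L : E →L[ℝ] E} (hL : L.det ≠ 0) (g : E → F) :
    ∫ x, g (L x) ∂μ = |L.det|⁻¹ • ∫ x, g x ∂μ := by
  have hbij : Function.Bijective L := (L.toContinuousLinearEquivOfDetNeZero hL).bijective
  have h := integral_image_eq_integral_abs_det_fderiv_smul μ .univ
    (fun x _ ↦ L.hasFDerivWithinAt) hbij.injective.injOn g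
  rw [Set.image_univ_of_surjective hbij.surjective, setIntegral_univ, setIntegral_univ,
    integral_smul] at h
  rw [h, inv_smul_smul₀ (abs_ne_zero.2 hL)]

end NormedSpace

lemma hasLineDerivAt_prod_coord {α ι : Type*} [DecidableEq α] (s : Finset α) (v : α → ι)
    (x w : EuclideanSpace ℝ ι) :
    HasLineDerivAt ℝ (fun x : EuclideanSpace ℝ ι ↦ ∏ a ∈ s, x (v a))
      (∑ b ∈ s, w (v b) * ∏ a ∈ s.erase b, x (v a)) x w := by
  have h (b : α) : HasDerivAt (fun t : ℝ ↦ (x + t • w) (v b)) (w (v b)) 0 := by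
    simpa using ((hasDerivAt_id (0 : ℝ)).mul_const (w (v b))).const_add (x (v b))
  simpa [HasLineDerivAt, mul_comm] using HasDerivAt.fun_finsetProd (u := s) fun b _ ↦ h b

section GaussianWeight

variable {ι : Type*} [Fintype ι] {Q : Matrix ι ι ℝ}

/-- The unnormalized density `exp (-⟨x, Q x⟩ / 2)` of the centred Gaussian measure with precision
matrix `Q`, that is, with covariance matrix `Q⁻¹` when `Q` is positive definite. -/
noncomputable def gaussianWeight (Q : Matrix ι ι ℝ) (x : EuclideanSpace ℝ ι) : ℝ :=
  exp (-(1 / 2) * (x ⬝ᵥ Q.mulVec x))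

lemma continuous_gaussianWeight (Q : Matrix ι ι ℝ) : Continuous (gaussianWeight Q) := by
  unfold gaussianWeight
  fun_prop

lemma hasLineDerivAt_gaussianWeight (hQ : Q.IsSymm) (x v : EuclideanSpace ℝ ι) :
    HasLineDerivAt ℝ (gaussianWeight Q) (-(v ⬝ᵥ Q *ᵥ x) * gaussianWeight Q x) x v := by
  have hcomm : x ⬝ᵥ Q *ᵥ v = v ⬝ᵥ Q *ᵥ x := by
    rw [dotProduct_mulVec, ← mulVec_transpose, hQ.eq, dotProduct_comm]
  classical
  have h := (((hasFDerivAt_id x).inner ℝ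
    ((toEuclideanCLM (𝕜 := ℝ) Q).hasFDerivAt)).const_mul (-(1 / 2))).exp.hasLineDerivAt v
  simp only [id_eq, inner_toEuclideanCLM] at h
  convert! h using 1
  simp only [gaussianWeight, _root_.smul_apply, ContinuousLinearMap.comp_apply,
    ContinuousLinearMap.prod_apply, ContinuousLinearMap.id_apply, fderivInnerCLM_apply,
    inner_toEuclideanCLM, hcomm, smul_eq_mul]
  ring

lemma exists_det_sq_eq_and_dotProduct_mulVec_eq_norm_sq [DecidableEq ι] (hQ : Q.PosSemidef) :
    ∃ L : EuclideanSpace ℝ ι →L[ℝ] EuclideanSpace ℝ ι,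
      L.det ^ 2 = Q.det ∧ ∀ x : EuclideanSpace ℝ ι, x ⬝ᵥ Q *ᵥ x = ‖L x‖ ^ 2 := by
  obtain ⟨B, rfl⟩ : ∃ B : Matrix ι ι ℝ, Q = Bᵀ * B := by
    open scoped MatrixOrder in
    exact CStarAlgebra.nonneg_iff_eq_star_mul_self.mp hQ.nonneg
  refine ⟨toEuclideanCLM (𝕜 := ℝ) B, ?_, fun x ↦ ?_⟩
  · rw [ContinuousLinearMap.det, coe_toEuclideanCLM_eq_toEuclideanLin, toEuclideanLin,
      toLpLin_eq_toLin, LinearMap.det_toLin, det_mul, det_transpose, sq]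
  · rw [EuclideanSpace.real_norm_sq_eq, ← mulVec_mulVec, dotProduct_mulVec, vecMul_transpose]
    simp only [dotProduct, ofLp_toEuclideanCLM, sq]

lemma exists_pos_mul_sq_norm_le_dotProduct_mulVec (hQ : Q.PosDef) :
    ∃ c > 0, ∀ x : EuclideanSpace ℝ ι, c * ‖x‖ ^ 2 ≤ x ⬝ᵥ Q *ᵥ x := by
  classical
  obtain ⟨L, hdet, hquad⟩ := exists_det_sq_eq_and_dotProduct_mulVec_eq_norm_sq hQ.posSemidef
  have hne : L.det ≠ 0 := pow_ne_zero_iff two_ne_zero |>.1 (hdet ▸ hQ.det_pos.ne')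
  have hinj : Function.Injective L := (L.toContinuousLinearEquivOfDetNeZero hne).injective
  obtain ⟨K, hK, hanti⟩ := L.toLinearMap.exists_antilipschitzWith (LinearMap.ker_eq_bot.2 hinj)
  refine ⟨(K ^ 2)⁻¹, by positivity, fun x ↦ ?_⟩
  rw [hquad, inv_mul_le_iff₀ (by positivity), ← mul_pow]
  gcongr
  simpa using hanti.le_mul_norm_sub x 0

lemma integral_gaussianWeight [DecidableEq ι] (hQ : Q.PosDef) :
    ∫ x, gaussianWeight Q x = (2 * π) ^ (Fintype.card ι / 2 : ℝ) * Q.det ^ (-(1 / 2) : ℝ) := by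
  obtain ⟨L, hdet, hquad⟩ := exists_det_sq_eq_and_dotProduct_mulVec_eq_norm_sq hQ.posSemidef
  have hne : L.det ≠ 0 := pow_ne_zero_iff two_ne_zero |>.1 (hdet ▸ hQ.det_pos.ne')
  have hinv : |L.det|⁻¹ = Q.det ^ (-(1 / 2) : ℝ) := by
    rw [rpow_neg hQ.det_pos.le, ← sqrt_eq_rpow, ← hdet, sqrt_sq_eq_abs]
  simp only [gaussianWeight, hquad]
  rw [integral_comp_continuousLinearMap volume hne fun y ↦ exp (-(1 / 2) * ‖y‖ ^ 2), hinv,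
    GaussianFourier.integral_rexp_neg_mul_sq_norm one_half_pos, finrank_euclideanSpace,
    smul_eq_mul, mul_comm, div_div_eq_mul_div, div_one, mul_comm π]

variable {α : Type*}

lemma integrable_prod_mul_gaussianWeight (hQ : Q.PosDef) (s : Finset α) (v : α → ι) :
    Integrable fun x : EuclideanSpace ℝ ι ↦ (∏ a ∈ s, x (v a)) * gaussianWeight Q x := by
  obtain ⟨c, hc, hle⟩ := exists_pos_mul_sq_norm_le_dotProduct_mulVec hQ
  refine (integrable_norm_pow_mul_exp_neg_mul_sq_norm volume (half_pos hc) s.card).mono'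
    ((by fun_prop : Continuous fun x : EuclideanSpace ℝ ι ↦ ∏ a ∈ s, x (v a)).mul
      (continuous_gaussianWeight Q)).aestronglyMeasurable (.of_forall fun x ↦ ?_)
  rw [norm_mul, norm_prod, gaussianWeight, norm_of_nonneg (exp_pos _).le]
  have hprod : ∏ a ∈ s, ‖x (v a)‖ ≤ ‖x‖ ^ s.card :=
    (Finset.prod_le_prod (fun _ _ ↦ norm_nonneg _) fun a _ ↦ PiLp.norm_apply_le x (v a)).trans_eq
      (Finset.prod_const _)
  have hexponent : -(1 / 2) * (x ⬝ᵥ Q *ᵥ x) ≤ -(c / 2) * ‖x‖ ^ 2 := by linarith [hle x]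
  exact mul_le_mul hprod (exp_le_exp.2 hexponent) (exp_pos _).le (by positivity)

variable [DecidableEq ι]

lemma integral_coord_mul_mul_gaussianWeight (hQ : Q.IsSymm) (hdet : IsUnit Q.det) (i : ι)
    {f f' : EuclideanSpace ℝ ι → ℝ}
    (hf : ∀ x, HasLineDerivAt ℝ f (f' x) x (WithLp.toLp 2 (Q⁻¹.row i)))
    (hint : Integrable fun x ↦ f x * gaussianWeight Q x)
    (hint_coord : Integrable fun x ↦ x i * f x * gaussianWeight Q x)
    (hint_deriv : Integrable fun x ↦ f' x * gaussianWeight Q x) :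
    ∫ x, x i * f x * gaussianWeight Q x = ∫ x, f' x * gaussianWeight Q x := by
  have hcoord (x : EuclideanSpace ℝ ι) : Q⁻¹.row i ⬝ᵥ Q *ᵥ x = x i := by
    change (Q⁻¹ *ᵥ (Q *ᵥ x)) i = x i
    rw [mulVec_mulVec, nonsing_inv_mul Q hdet, one_mulVec]
  have hweight (x : EuclideanSpace ℝ ι) : HasLineDerivAt ℝ (gaussianWeight Q)
      (-x i * gaussianWeight Q x) x (WithLp.toLp 2 (Q⁻¹.row i)) := by
    simpa only [hcoord] using hasLineDerivAt_gaussianWeight hQ x (WithLp.toLp 2 (Q⁻¹.row i))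
  have hswap (x : EuclideanSpace ℝ ι) :
      f x * (-x i * gaussianWeight Q x) = -(x i * f x * gaussianWeight Q x) := by ring
  have h := integral_bilinear_hasLineDerivAt_right_eq_neg_left_of_integrable
    (μ := volume) (B := ContinuousLinearMap.mul ℝ ℝ) hint_deriv
    (hint_coord.neg.congr (.of_forall fun x ↦ (hswap x).symm)) hint
    (fun x _ ↦ hf x) (fun x _ ↦ hweight x)
  simpa only [ContinuousLinearMap.mul_apply', hswap, integral_neg, neg_inj] using h

lemma integral_coord_mul_prod_mul_gaussianWeight [DecidableEq α] (hQ : Q.PosDef) (i : ι)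
    (s : Finset α) (v : α → ι) :
    ∫ x, x i * (∏ a ∈ s, x (v a)) * gaussianWeight Q x =
      ∑ b ∈ s, Q⁻¹ i (v b) * ∫ x, (∏ a ∈ s.erase b, x (v a)) * gaussianWeight Q x := by
  have hint_erase (b : α) :=
    (integrable_prod_mul_gaussianWeight hQ (s.erase b) v).const_mul (Q⁻¹ i (v b))
  have hint_insert := integrable_prod_mul_gaussianWeight hQ s.insertNone (Option.elim · i v)
  have hexpand (x : EuclideanSpace ℝ ι) :
      (∑ b ∈ s, Q⁻¹ i (v b) * ∏ a ∈ s.erase b, x (v a)) * gaussianWeight Q x =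
        ∑ b ∈ s, Q⁻¹ i (v b) * ((∏ a ∈ s.erase b, x (v a)) * gaussianWeight Q x) := by
    simp only [Finset.sum_mul, mul_assoc]
  rw [integral_coord_mul_mul_gaussianWeight (isHermitian_iff_isSymm.1 hQ.isHermitian)
    hQ.det_pos.ne'.isUnit i (hasLineDerivAt_prod_coord s v · _)
    (integrable_prod_mul_gaussianWeight hQ s v) (by simpa using hint_insert)
    (by simpa only [row_apply, hexpand] using integrable_finsetSum s fun b _ ↦ hint_erase b)]
  simp only [row_apply, hexpand]
  rw [integral_finsetSum s fun b _ ↦ hint_erase b]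
  simp only [integral_const_mul]

lemma integral_coord_mul_coord_mul_gaussianWeight (hQ : Q.PosDef) (i j : ι) :
    ∫ x, x i * x j * gaussianWeight Q x = Q⁻¹ i j * ∫ x, gaussianWeight Q x := by
  simpa using integral_coord_mul_prod_mul_gaussianWeight hQ i {j} id

theorem gaussian_fourth_moment_wick_general (hQ : Q.PosDef) (i j k l : ι) :
    ∫ x : EuclideanSpace ℝ ι,
        x i * x j * x k * x l * exp (-(1 / 2) * (x ⬝ᵥ Q.mulVec x))
      = (2 * π) ^ ((Fintype.card ι : ℝ) / 2) * Q.det ^ (-(1 / 2) : ℝ)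
          * (Q⁻¹ i j * Q⁻¹ k l + Q⁻¹ i k * Q⁻¹ j l + Q⁻¹ i l * Q⁻¹ j k) := by
  have h0 : Finset.univ.erase (0 : Fin 3) = {1, 2} := by decide
  have h1 : Finset.univ.erase (1 : Fin 3) = {0, 2} := by decide
  have h2 : Finset.univ.erase (2 : Fin 3) = {0, 1} := by decide
  calc ∫ x : EuclideanSpace ℝ ι, x i * x j * x k * x l * exp (-(1 / 2) * (x ⬝ᵥ Q.mulVec x))
      = ∫ x, x i * (x j * x k * x l) * gaussianWeight Q x := by
        simp only [gaussianWeight, mul_assoc]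
    _ = Q⁻¹ i j * (∫ x, x k * x l * gaussianWeight Q x)
          + Q⁻¹ i k * (∫ x, x j * x l * gaussianWeight Q x)
          + Q⁻¹ i l * (∫ x, x j * x k * gaussianWeight Q x) := by
        simpa [Fin.sum_univ_three, Fin.prod_univ_three, h0, h1, h2] using
          integral_coord_mul_prod_mul_gaussianWeight hQ i Finset.univ ![j, k, l]
    _ = _ := by
        simp only [integral_coord_mul_coord_mul_gaussianWeight hQ, integral_gaussianWeight hQ]
        ring

end GaussianWeight

/-- **Wick's formula for the fourth Gaussian moment.**
Let `Q` be a real symmetric positive-definite `n × n` matrix.  For all indices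
`i, j, k, l`:
`∫ xᵢ·xⱼ·xₖ·xₗ·exp (-(1/2)⟨x, Q·x⟩) dx
  = (2π)^{n/2}·(det Q)^{-1/2}·((Q⁻¹)ᵢⱼ(Q⁻¹)ₖₗ + (Q⁻¹)ᵢₖ(Q⁻¹)ⱼₗ + (Q⁻¹)ᵢₗ(Q⁻¹)ⱼₖ)`,
the sum over the three perfect pairings of `{i, j, k, l}`. -/
theorem gaussian_fourth_moment_wick (n : ℕ) (Q : Matrix (Fin n) (Fin n) ℝ)
    (hQ : Q.PosDef) (hQsymm : Q.IsSymm) (i j k l : Fin n) :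
    ∫ x : EuclideanSpace ℝ (Fin n),
        x i * x j * x k * x l * Real.exp (-(1 / 2) * (x ⬝ᵥ Q.mulVec x))
      = (2 * π) ^ ((n : ℝ) / 2) * Q.det ^ (-(1 / 2) : ℝ)
          * (Q⁻¹ i j * Q⁻¹ k l + Q⁻¹ i k * Q⁻¹ j l + Q⁻¹ i l * Q⁻¹ j k) := by
  simpa only [Fintype.card_fin] using gaussian_fourth_moment_wick_general hQ i j k l
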